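/- Let d be a right-continuous distortion function and u : ℝ → ℝ an increasing left-continuous function. Then for every F ∈ M and x ∈ ℝ one has T_d(F)(x) = d(F(x)), and moreover T_d ∘ T^u(F)(x) = d(F(u_R^{-1}(x))) = T^u ∘ T_d(F)(x), where u_R^{-1}(x) = sup{y ∈ ℝ : u(y) ≤ x}; in particular T_d and T^u commute on M. -/

import Mathlib

/-!
A right-continuous `d` composed with a cdf is again right-continuous, so `T_d F = d ∘ F`. Left
continuity of the increasing function `u` makes its sublevel sets closed, so that
`u y ≤ x ↔ y ≤ u_R⁻¹ x` in the extended reals; taking probabilities, `T^u F = F ∘ u_R⁻¹`. Thus `T_d`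
is composition on the left and `T^u` composition on the right, and the two commute.
-/

open MeasureTheory Filter Topology Set

noncomputable section

/-- The set of cdfs of compactly supported probability distributions on ℝ:
increasing, right-continuous, equal to `0` for all sufficiently small `x` and
equal to `1` for all sufficiently large `x`. -/
def mSet : Set (ℝ → ℝ) :=
  {F | Monotone F ∧ (∀ x, ContinuousWithinAt F (Set.Ici x) x) ∧
    (∃ a, ∀ x ≤ a, F x = 0) ∧ (∃ b, ∀ x, b ≤ x → F x = 1)}

/-- The set of cdfs of all probability distributions on ℝ: increasing,
right-continuous, with limit `0` at `-∞` and limit `1` at `+∞`. -/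
def m0Set : Set (ℝ → ℝ) :=
  {F | Monotone F ∧ (∀ x, ContinuousWithinAt F (Set.Ici x) x) ∧
    Tendsto F atBot (𝓝 0) ∧ Tendsto F atTop (𝓝 1)}

/-- A utility function: increasing (non-strict) and continuous. -/
def IsUF (u : ℝ → ℝ) : Prop := Monotone u ∧ Continuous u

/-- An increasing and left-continuous function on ℝ. -/
def IsLeftCtsIncr (u : ℝ → ℝ) : Prop :=
  Monotone u ∧ ∀ x, ContinuousWithinAt u (Set.Iic x) x

/-- A distortion function: an increasing function `d : [0,1] → [0,1]` with
`d 0 = 0` and `d 1 = 1` (values outside `[0,1]` are irrelevant). -/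
def IsDF (d : ℝ → ℝ) : Prop :=
  MonotoneOn d (Set.Icc 0 1) ∧ d 0 = 0 ∧ d 1 = 1

/-- Right-continuity of a distortion function on `[0,1)`. -/
def DFRightCts (d : ℝ → ℝ) : Prop :=
  ∀ x ∈ Set.Ico (0:ℝ) 1, ContinuousWithinAt d (Set.Ioi x) x

/-- A distortion function with moreover `d(0+) = 0` and `d(1-) = 1`. -/
def IsDFhat (d : ℝ → ℝ) : Prop :=
  IsDF d ∧ Tendsto d (𝓝[>] (0:ℝ)) (𝓝 0) ∧ Tendsto d (𝓝[<] (1:ℝ)) (𝓝 1)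

/-- The probability distortion generated by `d`:  `T_d F x = (d ∘ F)(x+)`,
the right limit of `d ∘ F` at `x`. -/
noncomputable def distortT (d F : ℝ → ℝ) : ℝ → ℝ :=
  fun x => Function.rightLim (d ∘ F) x

/-- The utility transform `T^u`: it maps a cdf `F` to the cdf of the
pushforward under `u` of the probability measure with cdf `F`. -/
noncomputable def utilityT (u F : ℝ → ℝ) : ℝ → ℝ := by
  classical
  exact
    if h : Monotone F ∧ ∀ x, ContinuousWithinAt F (Set.Ici x) x then
      fun x => ((StieltjesFunction.measure ⟨F, h.1, h.2⟩).map u (Set.Iic x)).toReal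
    else F

/-- Left quantile `F_L^{-1}(p) = inf {x | F x ≥ p}`. -/
noncomputable def leftQ (F : ℝ → ℝ) (p : ℝ) : ℝ := sInf {x | p ≤ F x}

/-- Right quantile `F_R^{-1}(p) = inf {x | F x > p}`. -/
noncomputable def rightQ (F : ℝ → ℝ) (p : ℝ) : ℝ := sInf {x | p < F x}

/-- `u_R^{-1}(x) = sup {y | u y ≤ x}` as an extended real (so `sup ∅ = ⊥`). -/
noncomputable def uRinvE (u : ℝ → ℝ) (x : ℝ) : EReal :=
  sSup {c : EReal | ∃ y : ℝ, c = (y : EReal) ∧ u y ≤ x}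

/-- Evaluation of a cdf at an extended real, with `F(−∞) = 0`, `F(+∞) = 1`. -/
noncomputable def evalExt (F : ℝ → ℝ) (c : EReal) : ℝ :=
  if c = ⊥ then 0 else if c = ⊤ then 1 else F c.toReal

section Cdf

open ProbabilityTheory

variable {F u : ℝ → ℝ}

lemma mSet_subset_m0Set : mSet ⊆ m0Set := by
  rintro F ⟨hmono, hcont, ⟨a, ha⟩, b, hb⟩
  refine ⟨hmono, hcont, tendsto_const_nhds.congr' ?_, tendsto_const_nhds.congr' ?_⟩
  · filter_upwards [eventually_le_atBot a] with x hx using (ha x hx).symm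
  · filter_upwards [eventually_ge_atTop b] with x hx using (hb x hx).symm

lemma mem_Icc_of_mem_m0Set (hF : F ∈ m0Set) (x : ℝ) : F x ∈ Icc (0 : ℝ) 1 :=
  ⟨hF.1.le_of_tendsto hF.2.2.1 x, hF.1.ge_of_tendsto hF.2.2.2 x⟩

lemma cdf_mem_m0Set (μ : Measure ℝ) : ⇑(cdf μ) ∈ m0Set :=
  ⟨monotone_cdf μ, (cdf μ).right_continuous, tendsto_cdf_atBot μ, tendsto_cdf_atTop μ⟩

lemma exists_cdf_eq_of_mem_m0Set (hF : F ∈ m0Set) :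
    ∃ μ : Measure ℝ, IsProbabilityMeasure μ ∧ ⇑(cdf μ) = F := by
  obtain ⟨hmono, hcont, hbot, htop⟩ := hF
  let f : StieltjesFunction ℝ := ⟨F, hmono, hcont⟩
  exact ⟨f.measure, f.isProbabilityMeasure hbot htop,
    congrArg _ (cdf_measure_stieltjesFunction f hbot htop)⟩

lemma utilityT_cdf (μ : Measure ℝ) [IsProbabilityMeasure μ] (hu : AEMeasurable u μ) :
    utilityT u (cdf μ) = cdf (μ.map u) := by
  have := Measure.isProbabilityMeasure_map hu
  ext x
  calc utilityT u (cdf μ) x = ((cdf μ).measure.map u).real (Iic x) := by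
        rw [utilityT, dif_pos ⟨monotone_cdf μ, (cdf μ).right_continuous⟩]; rfl
    _ = cdf (μ.map u) x := by rw [measure_cdf, cdf_eq_real]

lemma utilityT_mem_m0Set (hu : Monotone u) (hF : F ∈ m0Set) : utilityT u F ∈ m0Set := by
  obtain ⟨μ, _, rfl⟩ := exists_cdf_eq_of_mem_m0Set hF
  rw [utilityT_cdf μ hu.measurable.aemeasurable]
  exact cdf_mem_m0Set _

lemma evalExt_cdf (μ : Measure ℝ) [IsProbabilityMeasure μ] (c : EReal) :
    evalExt (cdf μ) c = μ.real {y : ℝ | (y : EReal) ≤ c} := by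
  induction c with
  | bot => simp [evalExt]
  | top => simp [evalExt]
  | coe c => simp [evalExt, cdf_eq_real, Iic]

lemma IsLeftCtsIncr.le_uRinvE_iff (hu : IsLeftCtsIncr u) {x y : ℝ} :
    (y : EReal) ≤ uRinvE u x ↔ u y ≤ x := by
  refine ⟨fun hy => ?_, fun hy => le_sSup ⟨y, rfl, hy⟩⟩
  have hlt : ∀ z < y, u z ≤ x := fun z hz => by
    obtain ⟨_, ⟨w, rfl, hw⟩, hzw⟩ := lt_sSup_iff.1 ((EReal.coe_lt_coe_iff.2 hz).trans_le hy)
    exact (hu.1 (EReal.coe_lt_coe_iff.1 hzw).le).trans hw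
  have hlim : Tendsto u (𝓝[<] y) (𝓝 (u y)) := (hu.2 y).mono Iio_subset_Iic_self
  exact le_of_tendsto hlim (eventually_mem_nhdsWithin.mono hlt)

lemma IsLeftCtsIncr.utilityT_apply (hu : IsLeftCtsIncr u) (hF : F ∈ m0Set) (x : ℝ) :
    utilityT u F x = evalExt F (uRinvE u x) := by
  obtain ⟨μ, _, rfl⟩ := exists_cdf_eq_of_mem_m0Set hF
  have hmeas := hu.1.measurable
  have := Measure.isProbabilityMeasure_map (μ := μ) hmeas.aemeasurable
  calc utilityT u (cdf μ) x = μ.real {y | u y ≤ x} := by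
        rw [utilityT_cdf μ hmeas.aemeasurable, cdf_eq_real,
          map_measureReal_apply hmeas measurableSet_Iic]; rfl
    _ = evalExt (cdf μ) (uRinvE u x) := by simp only [evalExt_cdf, hu.le_uRinvE_iff]

end Cdf

section Distortion

variable {d F : ℝ → ℝ}

lemma DFRightCts.continuousWithinAt_comp (hd : DFRightCts d) (hmono : Monotone F)
    (hF : ∀ x, F x ∈ Icc (0 : ℝ) 1) {x : ℝ} (hcont : ContinuousWithinAt F (Ici x) x) :
    ContinuousWithinAt (d ∘ F) (Ici x) x := by
  rcases (hF x).2.lt_or_eq with hlt | hone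
  · have hdx : ContinuousWithinAt d (Ici (F x)) (F x) :=
      continuousWithinAt_Ioi_iff_Ici.1 (hd (F x) ⟨(hF x).1, hlt⟩)
    exact hdx.comp hcont fun _ hy => hmono hy
  · -- `d` may jump to the right of `1`, but there `F` is already constant.
    have hconst : ∀ y ∈ Ici x, F y = F x := fun y hy =>
      le_antisymm (hone ▸ (hF y).2) (hmono hy)
    exact continuousWithinAt_const.congr (fun y hy => congrArg d (hconst y hy)) rfl

lemma DFRightCts.distortT_eq_comp (hd : DFRightCts d) (hF : F ∈ m0Set) :
    distortT d F = d ∘ F :=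
  funext fun x =>
    (hd.continuousWithinAt_comp hF.1 (mem_Icc_of_mem_m0Set hF) (hF.2.1 x)).rightLim_eq

lemma IsDF.distortT_mem_mSet (hd : IsDF d) (hdr : DFRightCts d) (hF : F ∈ mSet) :
    distortT d F ∈ mSet := by
  have hF₀ := mSet_subset_m0Set hF
  have hI := mem_Icc_of_mem_m0Set hF₀
  obtain ⟨hmono, hcont, ⟨a, ha⟩, b, hb⟩ := hF
  rw [hdr.distortT_eq_comp hF₀]
  exact ⟨fun x y hxy => hd.1 (hI x) (hI y) (hmono hxy),
    fun x => hdr.continuousWithinAt_comp hmono hI (hcont x),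
    ⟨a, fun x hx => (congrArg d (ha x hx)).trans hd.2.1⟩,
    ⟨b, fun x hx => (congrArg d (hb x hx)).trans hd.2.2⟩⟩

lemma evalExt_comp (hd₀ : d 0 = 0) (hd₁ : d 1 = 1) (F : ℝ → ℝ) (c : EReal) :
    evalExt (d ∘ F) c = d (evalExt F c) := by
  unfold evalExt
  split_ifs <;> simp only [hd₀, hd₁, Function.comp_apply]

end Distortion

theorem stmt16_general {d u F : ℝ → ℝ} (hd₀ : d 0 = 0) (hd₁ : d 1 = 1) (hdr : DFRightCts d)
    (hu : IsLeftCtsIncr u) (hF : F ∈ m0Set) (hdF : distortT d F ∈ m0Set) :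
    (∀ x, distortT d F x = d (F x)) ∧
    (∀ x, distortT d (utilityT u F) x = d (evalExt F (uRinvE u x)) ∧
      d (evalExt F (uRinvE u x)) = utilityT u (distortT d F) x) ∧
    distortT d (utilityT u F) = utilityT u (distortT d F) := by
  have distort_utility (x : ℝ) :
      distortT d (utilityT u F) x = d (evalExt F (uRinvE u x)) := by
    rw [hdr.distortT_eq_comp (utilityT_mem_m0Set hu.1 hF), Function.comp_apply,
      hu.utilityT_apply hF]
  have utility_distort (x : ℝ) :
      d (evalExt F (uRinvE u x)) = utilityT u (distortT d F) x := by
    rw [hu.utilityT_apply hdF, hdr.distortT_eq_comp hF, evalExt_comp hd₀ hd₁]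
  exact ⟨congrFun (hdr.distortT_eq_comp hF),
    fun x => ⟨distort_utility x, utility_distort x⟩,
    funext fun x => (distort_utility x).trans (utility_distort x)⟩

/-- For a right-continuous distortion function `d` and an increasing
left-continuous `u : ℝ → ℝ`: `T_d F x = d (F x)` on `M`, and moreover
`T_d (T^u F) x = d (F (u_R^{-1} x)) = T^u (T_d F) x`; in particular `T_d` and
`T^u` commute on `M`. -/
theorem stmt16 (d u : ℝ → ℝ) (hd : IsDF d) (hdr : DFRightCts d)
    (hu : IsLeftCtsIncr u) :
    (∀ F ∈ mSet, ∀ x, distortT d F x = d (F x)) ∧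
    (∀ F ∈ mSet, ∀ x,
      distortT d (utilityT u F) x = d (evalExt F (uRinvE u x)) ∧
      d (evalExt F (uRinvE u x)) = utilityT u (distortT d F) x) ∧
    (∀ F ∈ mSet, distortT d (utilityT u F) = utilityT u (distortT d F)) := by
  have h {F : ℝ → ℝ} (hF : F ∈ mSet) := stmt16_general hd.2.1 hd.2.2 hdr hu
    (mSet_subset_m0Set hF) (mSet_subset_m0Set (hd.distortT_mem_mSet hdr hF))
  exact ⟨fun _ hF => (h hF).1, fun _ hF => (h hF).2.1, fun _ hF => (h hF).2.2⟩
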